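/- Suppose Assumption A1 holds, the influence network is a star topology with center node 1 (C_{j1} = 1 and C_{ji} = 0 for all j ≠ 1 and all i ≠ 1), and the center node is fully stubborn (a_1 = 0). Let p* be the equilibrium given by p*_i = 1/n for fully stubborn i ≠ 1, p*_i = (1 − √(1 − 4a_i(1 − a_i)/n))/(2a_i) for i ∈ V_p, and p*_1 = 1/n + (1/n)∑_{j ∈ V_p} a_j(1 − p*_j)/(1 − a_j p*_j). Then p* is exponentially stable for the perception dynamics with reflected appraisals (system (11)): there exist δ > 0, c > 0 and λ ∈ (0,1) such that for every p(0) with ‖p(0) − p*‖ < δ, the trajectory satisfies ‖p(s) − p*‖ ≤ c λ^s ‖p(0) − p*‖ for all s ≥ 0. -/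

import Mathlib

/-!
With a fully stubborn center the star dynamics is a cascade. Each leaf `i ≠ 0` evolves on its own by
`x ↦ a_i x² + (1 - a_i) / n`, and the center is a function of the leaves at the previous step. So
the linearization at `p*` is triangular, up to the order of the nodes, with diagonal entries
`2 a_i p*_i = 1 - √(1 - 4 a_i (1 - a_i) / n)`. As `4 a_i (1 - a_i) ≤ 1` and `n ≥ 2`, these lie in
`[0, 3/10]`.

The nonlinear estimate is explicit. If `e = x - p*_i` is a leaf error with `|e| < 1/2`, the next
error is `a_i e (e + 2 p*_i)`, at most `(1/2 + 3/10) |e| = (4/5) |e|`; hence leaf errors decay like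
`(4/5)^s` (`leaf_contraction`). The next center error is
`∑ j, a_j / (1 - a_j) * e_j * (1 - 2 p*_j - e_j)`, at most a constant times the largest leaf error,
so the center inherits the rate, one step late.
-/

open Matrix Finset

/-- `W(x) = diag(x) + (I - diag(x)) C`. -/
noncomputable def Wmat (n : ℕ) (C : Matrix (Fin n) (Fin n) ℝ) (x : Fin n → ℝ) :
    Matrix (Fin n) (Fin n) ℝ :=
  Matrix.diagonal x + (1 - Matrix.diagonal x) * C

/-- The map of system (11): `p ↦ (I - A) W(p)ᵀ A (I - A)⁻¹ p + (I - A) 𝟙 / n`. -/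
noncomputable def percMap (n : ℕ) (C : Matrix (Fin n) (Fin n) ℝ) (a : Fin n → ℝ)
    (p : Fin n → ℝ) : Fin n → ℝ :=
  ((1 - Matrix.diagonal a) * (Wmat n C p)ᵀ * Matrix.diagonal a *
      (1 - Matrix.diagonal a)⁻¹) *ᵥ p
    + (1 / (n : ℝ)) • ((1 - Matrix.diagonal a) *ᵥ (fun _ => (1 : ℝ)))

/-- The `n`-simplex `Δ_n`. -/
def simplex (n : ℕ) : Set (Fin n → ℝ) := {x | (∀ i, 0 ≤ x i) ∧ ∑ i, x i = 1}

/-- The box `Γ_n(y, z) = {x : y ≤ x ≤ z}`. -/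
def box (n : ℕ) (y z : Fin n → ℝ) : Set (Fin n → ℝ) := {x | ∀ i, y i ≤ x i ∧ x i ≤ z i}

/-- Entrywise form of `percMap`; the factor `(1 - a_j)⁻¹` is a genuine inverse as `a_j < 1`. -/
lemma percMap_apply (n : ℕ) (C : Matrix (Fin n) (Fin n) ℝ) (a : Fin n → ℝ)
    (ha1 : ∀ i, a i < 1) (p : Fin n → ℝ) (i : Fin n) :
    percMap n C a p i = (1 - a i) * ∑ j, Wmat n C p j i * (a j / (1 - a j) * p j)
      + (1 - a i) / n := by
  have h1 : (1 - Matrix.diagonal a : Matrix (Fin n) (Fin n) ℝ)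
      = Matrix.diagonal (fun i => 1 - a i) := by
    rw [← Matrix.diagonal_one, Matrix.diagonal_sub]
  have h2 : (Matrix.diagonal (fun i => 1 - a i))⁻¹ = Matrix.diagonal (fun i => (1 - a i)⁻¹) := by
    apply Matrix.inv_eq_right_inv
    rw [Matrix.diagonal_mul_diagonal, ← Matrix.diagonal_one]
    congr 1
    funext j
    exact mul_inv_cancel₀ (by linarith [ha1 j])
  unfold percMap
  rw [h1, h2]
  simp only [Pi.add_apply, Pi.smul_apply, smul_eq_mul, Matrix.mulVec, dotProduct,
    Matrix.mul_diagonal, Matrix.diagonal_mul, Matrix.transpose_apply]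
  congr 1
  · rw [Finset.mul_sum]
    refine Finset.sum_congr rfl fun j _ => ?_
    ring
  · simp [Matrix.diagonal_apply]
    ring

lemma Wmat_apply (n : ℕ) (C : Matrix (Fin n) (Fin n) ℝ) (x : Fin n → ℝ) (j i : Fin n) :
    Wmat n C x j i = (if j = i then x j else 0) + (1 - x j) * C j i := by
  simp [Wmat, sub_mul, Matrix.sub_apply, Matrix.diagonal_mul, Matrix.diagonal_apply]

/-- The smaller root of `x = a x² + (1 - a) / n` satisfies that equation, and the multiplier
`2 a x` of the map at this point lies in `[0, 3/10]`. -/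
lemma leaf_root {n : ℕ} (hn : 2 ≤ n) {a x : ℝ} (ha : 0 < a) (ha1 : a < 1)
    (hx : x = (1 - Real.sqrt (1 - 4 * a * (1 - a) / n)) / (2 * a)) :
    x = a * x ^ 2 + (1 - a) / n ∧ 0 ≤ 2 * a * x ∧ 2 * a * x ≤ 3 / 10 := by
  have hn' : (2 : ℝ) ≤ n := by exact_mod_cast hn
  have hq : 4 * a * (1 - a) / n ≤ 1 / 2 := by
    rw [div_le_iff₀ (by linarith)]
    nlinarith [sq_nonneg (2 * a - 1)]
  have hq0 : 0 ≤ 4 * a * (1 - a) / n := by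
    have : 0 < 1 - a := by linarith
    positivity
  have hs := Real.sq_sqrt (show 0 ≤ 1 - 4 * a * (1 - a) / n by linarith)
  have hs7 : 7 / 10 ≤ Real.sqrt (1 - 4 * a * (1 - a) / n) :=
    Real.le_sqrt_of_sq_le (by norm_num; linarith)
  have hs1 : Real.sqrt (1 - 4 * a * (1 - a) / n) ≤ 1 :=
    Real.sqrt_le_one.mpr (by linarith)
  generalize Real.sqrt (1 - 4 * a * (1 - a) / n) = r at *
  have h2 : 2 * a * x = 1 - r := by rw [hx]; field_simp
  refine ⟨?_, by linarith, by linarith⟩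
  have hr : r = 1 - 2 * a * x := by linarith
  have h4 : 4 * a * (1 - a) / n = 4 * a * ((1 - a) / n) := by ring
  rw [hr, h4] at hs
  have : 4 * a * (x - (a * x ^ 2 + (1 - a) / n)) = 0 := by linarith
  rcases mul_eq_zero.mp this with h | h <;> linarith

lemma leaf_contraction {n : ℕ} {a q x : ℝ} (ha : 0 ≤ a) (ha1 : a < 1)
    (hq : q = a * q ^ 2 + (1 - a) / n) (h0 : 0 ≤ 2 * a * q) (h1 : 2 * a * q ≤ 3 / 10)
    (hx : |x - q| ≤ 1 / 2) :
    |a * x ^ 2 + (1 - a) / n - q| ≤ 4 / 5 * |x - q| := by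
  have h : a * x ^ 2 + (1 - a) / n - q = (a * (x - q) + 2 * a * q) * (x - q) := by
    linear_combination -hq
  rw [h, abs_mul]
  gcongr
  calc |a * (x - q) + 2 * a * q| ≤ |a * (x - q)| + |2 * a * q| := abs_add_le _ _
    _ = a * |x - q| + 2 * a * q := by rw [abs_mul, abs_of_nonneg ha, abs_of_nonneg h0]
    _ ≤ 4 / 5 := by nlinarith [abs_nonneg (x - q)]

/-- Theorem 3(iii): star topology with fully stubborn center node `0`;
the equilibrium `p*` is exponentially stable for system (11). -/
theorem star_fully_stubborn_center_exponential_stability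
    (n : ℕ) [NeZero n] (hn : 2 ≤ n)
    (C : Matrix (Fin n) (Fin n) ℝ)
    (hC0 : ∀ i j, 0 ≤ C i j) (hCrow : ∀ i, ∑ j, C i j = 1) (hCdiag : ∀ i, C i i = 0)
    (a : Fin n → ℝ) (ha0 : ∀ i, 0 ≤ a i) (ha1 : ∀ i, a i < 1) (hane : a ≠ 0)
    (hstar1 : ∀ j : Fin n, j ≠ 0 → C j 0 = 1)
    (hstar2 : ∀ j : Fin n, j ≠ 0 → ∀ i : Fin n, i ≠ 0 → C j i = 0)
    (hcenter : a 0 = 0)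
    (pstar : Fin n → ℝ)
    (hpf : ∀ i : Fin n, i ≠ 0 → a i = 0 → pstar i = 1 / (n : ℝ))
    (hpp : ∀ i : Fin n, 0 < a i →
      pstar i = (1 - Real.sqrt (1 - 4 * a i * (1 - a i) / n)) / (2 * a i))
    (hp1 : pstar 0 = 1 / (n : ℝ) + (1 / (n : ℝ)) *
      ∑ j ∈ Finset.univ.filter (fun j => 0 < a j),
        a j * (1 - pstar j) / (1 - a j * pstar j)) :
    ∃ δ > 0, ∃ c > 0, ∃ lam ∈ Set.Ioo (0 : ℝ) 1,
      ∀ p : ℕ → Fin n → ℝ, (∀ s, p (s + 1) = percMap n C a (p s)) →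
        ‖p 0 - pstar‖ < δ →
        ∀ s : ℕ, ‖p s - pstar‖ ≤ c * lam ^ s * ‖p 0 - pstar‖ := by
  have hperc_leaf : ∀ (p : Fin n → ℝ) (i : Fin n), i ≠ 0 →
      percMap n C a p i = a i * p i ^ 2 + (1 - a i) / n := by
    intro p i hi
    rw [percMap_apply n C a ha1, Finset.sum_eq_single i]
    · rw [Wmat_apply, hCdiag]
      have : 1 - a i ≠ 0 := by linarith [ha1 i]
      simp only [if_true]
      field_simp
      ring
    · intro j _ hj
      by_cases hj0 : j = 0
      · simp [hj0, hcenter]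
      · simp [Wmat_apply, hj, hstar2 j hj0 i hi]
    · simp
  have hperc_center : ∀ p : Fin n → ℝ,
      percMap n C a p 0 = ∑ j, a j / (1 - a j) * ((1 - p j) * p j) + 1 / n := by
    intro p
    rw [percMap_apply n C a ha1, hcenter, sub_zero, one_mul]
    congr 1
    refine Finset.sum_congr rfl fun j _ => ?_
    by_cases hj : j = 0
    · simp [hj, hcenter]
    · rw [Wmat_apply, if_neg hj, hstar1 j hj]
      ring
  have hroot : ∀ i : Fin n, i ≠ 0 → pstar i = a i * pstar i ^ 2 + (1 - a i) / n ∧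
      0 ≤ 2 * a i * pstar i ∧ 2 * a i * pstar i ≤ 3 / 10 := by
    intro i hi
    rcases (ha0 i).eq_or_lt with h | h
    · rw [hpf i hi h.symm, ← h]
      norm_num
    · exact leaf_root hn h (ha1 i) (hpp i h)
  have hcenter_eq : pstar 0 = ∑ j, a j / (1 - a j) * ((1 - pstar j) * pstar j) + 1 / n := by
    rw [hp1, add_comm, Finset.mul_sum, Finset.sum_filter]
    congr 1
    refine Finset.sum_congr rfl fun j _ => ?_
    split_ifs with h
    · have hj : j ≠ 0 := by
        rintro rfl
        linarith
      obtain ⟨h1, h2, h3⟩ := hroot j hj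
      have hd : 1 - a j * pstar j ≠ 0 := by linarith
      have ha' : 1 - a j ≠ 0 := by linarith [ha1 j]
      -- The fixed-point equation reads `p*_j * (1 - a_j * p*_j) = (1 - a_j) / n`.
      have hinv : 1 / (n : ℝ) = pstar j * (1 - a j * pstar j) / (1 - a j) := by
        rw [eq_div_iff ha']
        linear_combination -h1
      rw [hinv, div_mul_div_comm, div_mul_eq_mul_div, div_eq_div_iff (mul_ne_zero ha' hd) ha']
      ring
    · have : a j = 0 := le_antisymm (not_lt.mp h) (ha0 j)
      simp [this]
  set K : ℝ := ∑ j, a j / (1 - a j) * (2 + 2 * |pstar j|) with hK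
  have hw : ∀ j, 0 ≤ a j / (1 - a j) := fun j =>
    div_nonneg (ha0 j) (by linarith [ha1 j])
  have hK0 : 0 ≤ K := Finset.sum_nonneg fun j _ => mul_nonneg (hw j) (by positivity)
  -- `c` must dominate `1` for the leaves and `K / (4/5)` for the delayed center.
  refine ⟨1 / 2, by norm_num, 1 + 2 * K, by positivity, 4 / 5, by norm_num, ?_⟩
  intro p hp hδ
  set E := ‖p 0 - pstar‖ with hE
  have hE0 : 0 ≤ E := norm_nonneg _
  have hleaf : ∀ s : ℕ, ∀ i : Fin n, i ≠ 0 → |p s i - pstar i| ≤ (4 / 5) ^ s * E := by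
    intro s
    induction s with
    | zero =>
      intro i _
      simpa using norm_le_pi_norm (p 0 - pstar) i
    | succ s ih =>
      intro i hi
      obtain ⟨h1, h2, h3⟩ := hroot i hi
      have hpow : ((4 : ℝ) / 5) ^ s ≤ 1 := pow_le_one₀ (by norm_num) (by norm_num)
      have hsmall : |p s i - pstar i| ≤ 1 / 2 := by
        have := mul_le_of_le_one_left hE0 hpow
        linarith [ih i hi]
      have := leaf_contraction (ha0 i) (ha1 i) h1 h2 h3 hsmall
      rw [hp s, hperc_leaf _ i hi, pow_succ (4 / 5 : ℝ) s]
      linarith [ih i hi]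
  have hcen : ∀ s : ℕ, |p (s + 1) 0 - pstar 0| ≤ K * ((4 / 5) ^ s * E) := by
    intro s
    have hpow : ((4 : ℝ) / 5) ^ s ≤ 1 := pow_le_one₀ (by norm_num) (by norm_num)
    rw [hp s, hperc_center, hcenter_eq, add_sub_add_right_eq_sub, ← Finset.sum_sub_distrib,
      hK, Finset.sum_mul]
    refine (Finset.abs_sum_le_sum_abs _ _).trans (Finset.sum_le_sum fun j _ => ?_)
    by_cases hj : j = 0
    · simp [hj, hcenter]
    · have he := hleaf s j hj
      have hd : |1 - 2 * pstar j - (p s j - pstar j)| ≤ 2 + 2 * |pstar j| := by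
        have := mul_le_of_le_one_left hE0 hpow
        have h1 := abs_le.mp (he.trans (this.trans hδ.le))
        have h2 := abs_le.mp (le_refl |pstar j|)
        rw [abs_le]
        constructor <;> linarith
      have hfac : a j / (1 - a j) * ((1 - p s j) * p s j)
          - a j / (1 - a j) * ((1 - pstar j) * pstar j)
          = a j / (1 - a j) * (1 - 2 * pstar j - (p s j - pstar j)) * (p s j - pstar j) := by
        ring
      rw [hfac, abs_mul, abs_mul, abs_of_nonneg (hw j)]
      have := hw j
      gcongr
  intro s
  have hpos : (0 : ℝ) ≤ (4 / 5) ^ s * E := by positivity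
  rw [mul_assoc, pi_norm_le_iff_of_nonneg (by positivity)]
  intro i
  rw [Pi.sub_apply, Real.norm_eq_abs]
  by_cases hi : i = 0
  · subst hi
    cases s with
    | zero =>
      have h : |p 0 0 - pstar 0| ≤ E := by simpa using norm_le_pi_norm (p 0 - pstar) 0
      rw [pow_zero, one_mul]
      nlinarith [mul_nonneg hK0 hE0]
    | succ s =>
      have h := hcen s
      have h0 : (0 : ℝ) ≤ (4 / 5) ^ s * E := by positivity
      rw [pow_succ]
      nlinarith [mul_nonneg hK0 h0]
  · have := hleaf s i hi
    nlinarith [mul_nonneg hK0 hpos]
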